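/- Let (Ω,Σ,ν) be a complete probability space, X, Y real Banach spaces, and T : X → Y a semi-embedding. Let f : Ω → X be a function for which there is a constant c > 0 such that for each y* ∈ Y* one has |y*(T(f(ω)))| ≤ c‖T*(y*)‖ for ν-almost every ω ∈ Ω (the exceptional set depending on y*). If T ∘ f : Ω → Y is Pettis integrable, then f is T*(Y*)-integrable: for every A ∈ Σ there exists a vector m(A) ∈ X such that y*(T(m(A))) = ∫_A y*(T(f(ω))) dν(ω) for all y* ∈ Y*. -/

import Mathlib

open MeasureTheory Filter Topology

/-- `T` is a semi-embedding: an injective bounded linear operator mapping the closed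
unit ball onto a norm-closed set. -/
def SemiEmbedding {X Y : Type*} [NormedAddCommGroup X] [NormedSpace ℝ X]
    [NormedAddCommGroup Y] [NormedSpace ℝ Y] (T : X →L[ℝ] Y) : Prop :=
  Function.Injective T ∧ IsClosed (T '' Metric.closedBall 0 1)

/-- `g` is Pettis integrable with respect to `ν`. -/
def PettisIntegrable {Ω Y : Type*} [MeasurableSpace Ω]
    [NormedAddCommGroup Y] [NormedSpace ℝ Y]
    (ν : Measure Ω) (g : Ω → Y) : Prop :=
  (∀ ψ : Y →L[ℝ] ℝ, Integrable (fun ω => ψ (g ω)) ν) ∧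
  ∀ A : Set Ω, MeasurableSet A → ∃ m : Y, ∀ ψ : Y →L[ℝ] ℝ, ψ m = ∫ ω in A, ψ (g ω) ∂ν

/-!
The unit ball enters through polarity: for `r ≥ 0`, the inequality `‖ψ y‖ ≤ r * ‖T* ψ‖` for all
functionals `ψ` on `Y` says that `y` lies in the bipolar of `T (r B_X)`, which by Hahn–Banach is the
closure of `T (r B_X)`. A weak integral `y` of `g` over `A` satisfies these inequalities with
`r = c * ν A`, by integrating the pointwise bound on each `ψ ∘ g`. As `T (r B_X)` is closed, `y` is
attained by a vector of `r B_X`.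
-/

theorem mul_opNorm_le_of_forall_re_le {𝕜 X : Type*} [RCLike 𝕜] [SeminormedAddCommGroup X]
    [NormedSpace 𝕜 X] (φ : X →L[𝕜] 𝕜) {r u : ℝ} (hr : 0 ≤ r)
    (hφ : ∀ x ∈ Metric.closedBall 0 r, RCLike.re (φ x) ≤ u) : r * ‖φ‖ ≤ u := by
  have hu : 0 ≤ u := by simpa using hφ 0 (Metric.mem_closedBall_self hr)
  have hnorm : ∀ x ∈ Metric.closedBall 0 r, ‖φ x‖ ≤ u := by
    intro x hx
    obtain ⟨a, ha, hax⟩ := RCLike.exists_norm_eq_mul_self (φ x)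
    have hax_mem : a • x ∈ Metric.closedBall 0 r := by
      rwa [mem_closedBall_zero_iff, norm_smul, ha, one_mul, ← mem_closedBall_zero_iff]
    calc ‖φ x‖ = RCLike.re (φ (a • x)) := by
          rw [map_smul, smul_eq_mul, ← hax, RCLike.ofReal_re]
      _ ≤ u := hφ _ hax_mem
  have hsmul : ∀ x : X, ‖x‖ = 1 → ‖((r : 𝕜) • φ) x‖ ≤ u := fun x hx => by
    rw [smul_apply, ← map_smul]
    refine hnorm _ (mem_closedBall_zero_iff.mpr ?_)
    rw [norm_smul, RCLike.norm_of_nonneg hr, hx, mul_one]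
  calc r * ‖φ‖ = ‖(r : 𝕜) • φ‖ := by rw [norm_smul, RCLike.norm_of_nonneg hr]
    _ ≤ u := ContinuousLinearMap.opNorm_le_of_unit_norm hu hsmul

theorem mem_closure_image_closedBall_of_forall_norm_le {𝕜 X Y : Type*} [RCLike 𝕜]
    [SeminormedAddCommGroup X] [NormedSpace 𝕜 X]
    [AddCommGroup Y] [TopologicalSpace Y] [IsTopologicalAddGroup Y] [Module ℝ Y] [Module 𝕜 Y]
    [IsScalarTower ℝ 𝕜 Y] [ContinuousSMul 𝕜 Y] [LocallyConvexSpace ℝ Y]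
    (T : X →L[𝕜] Y) {r : ℝ} (hr : 0 ≤ r) {y : Y} (hy : ∀ ψ : Y →L[𝕜] 𝕜, ‖ψ y‖ ≤ r * ‖ψ.comp T‖) :
    y ∈ closure (T '' Metric.closedBall 0 r) := by
  by_contra hy_notMem
  let _ : NormedSpace ℝ X := NormedSpace.restrictScalars ℝ 𝕜 X
  have : IsScalarTower ℝ 𝕜 X := RestrictScalars.isScalarTower ℝ 𝕜 X
  have : ContinuousSMul ℝ Y := IsScalarTower.continuousSMul 𝕜
  have hconvex : Convex ℝ (T '' Metric.closedBall 0 r) :=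
    (convex_closedBall 0 r).linear_image (T.toLinearMap.restrictScalars ℝ)
  obtain ⟨ψ, u, hψ_lt, hlt_ψ⟩ := RCLike.geometric_hahn_banach_closed_point (𝕜 := 𝕜)
    hconvex.closure isClosed_closure hy_notMem
  have hnorm : r * ‖ψ.comp T‖ ≤ u := mul_opNorm_le_of_forall_re_le (ψ.comp T) hr
    fun x hx => (hψ_lt (T x) (subset_closure (Set.mem_image_of_mem T hx))).le
  exact hlt_ψ.not_ge ((RCLike.re_le_norm _).trans ((hy ψ).trans hnorm))

open scoped Pointwise in
theorem isClosed_image_closedBall_of_isClosed_image_unitClosedBall {X Y : Type*}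
    [NormedAddCommGroup X] [NormedSpace ℝ X]
    [AddCommGroup Y] [TopologicalSpace Y] [T1Space Y] [Module ℝ Y] [ContinuousConstSMul ℝ Y]
    {T : X →ₗ[ℝ] Y} (hT : IsClosed (T '' Metric.closedBall 0 1)) {r : ℝ} (hr : 0 ≤ r) :
    IsClosed (T '' Metric.closedBall 0 r) := by
  rw [← smul_unitClosedBall_of_nonneg hr, image_smul_set]
  exact hT.smul₀ r

theorem TstarYstar_integrable_of_semiEmbedding_general
    {Ω X Y : Type*} [MeasurableSpace Ω]
    [NormedAddCommGroup X] [NormedSpace ℝ X] [NormedAddCommGroup Y] [NormedSpace ℝ Y]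
    (ν : Measure Ω) (T : X →L[ℝ] Y) (hT : IsClosed (T '' Metric.closedBall 0 1))
    (g : Ω → Y) (c : ℝ) (hc : 0 ≤ c)
    (hbound : ∀ ψ : Y →L[ℝ] ℝ, ∀ᵐ ω ∂ν, |ψ (g ω)| ≤ c * ‖ψ.comp T‖)
    (hPettis : PettisIntegrable ν g) (A : Set Ω) (hA : MeasurableSet A) (hνA : ν A ≠ ⊤) :
    ∃ m : X, ‖m‖ ≤ c * ν.real A ∧ ∀ ψ : Y →L[ℝ] ℝ, ψ (T m) = ∫ ω in A, ψ (g ω) ∂ν := by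
  obtain ⟨y, hy⟩ := hPettis.2 A hA
  have hr : 0 ≤ c * ν.real A := mul_nonneg hc measureReal_nonneg
  have hy_le : ∀ ψ : Y →L[ℝ] ℝ, ‖ψ y‖ ≤ c * ν.real A * ‖ψ.comp T‖ := fun ψ =>
    calc ‖ψ y‖ = ‖∫ ω in A, ψ (g ω) ∂ν‖ := by rw [hy ψ]
      _ ≤ c * ‖ψ.comp T‖ * ν.real A :=
        norm_setIntegral_le_of_norm_le_const_ae hνA.lt_top (ae_restrict_of_ae (hbound ψ))
      _ = c * ν.real A * ‖ψ.comp T‖ := mul_right_comm _ _ _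
  have hclosed : IsClosed (T '' Metric.closedBall 0 (c * ν.real A)) :=
    isClosed_image_closedBall_of_isClosed_image_unitClosedBall (T := T.toLinearMap) hT hr
  obtain ⟨m, hm, rfl⟩ : y ∈ T '' Metric.closedBall 0 (c * ν.real A) :=
    hclosed.closure_eq ▸ mem_closure_image_closedBall_of_forall_norm_le T hr hy_le
  exact ⟨m, mem_closedBall_zero_iff.mp hm, hy⟩

/-- If `T : X → Y` is a semi-embedding, `f : Ω → X` satisfies
`|⟨T*(y*), f⟩| ≤ c‖T*(y*)‖` a.e. for each `y*`, and `T ∘ f` is Pettis integrable,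
then `f` is `T*(Y*)`-integrable. -/
theorem TstarYstar_integrable_of_semiEmbedding
    {Ω X Y : Type*} [MeasurableSpace Ω]
    [NormedAddCommGroup X] [NormedSpace ℝ X] [CompleteSpace X]
    [NormedAddCommGroup Y] [NormedSpace ℝ Y] [CompleteSpace Y]
    (ν : Measure Ω) [IsProbabilityMeasure ν] [ν.IsComplete]
    (T : X →L[ℝ] Y) (hT : SemiEmbedding T)
    (f : Ω → X) (c : ℝ) (hc : 0 < c)
    (hbound : ∀ ψ : Y →L[ℝ] ℝ, ∀ᵐ ω ∂ν, |ψ (T (f ω))| ≤ c * ‖ψ.comp T‖)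
    (hPettis : PettisIntegrable ν (fun ω => T (f ω))) :
    ∀ A : Set Ω, MeasurableSet A →
      ∃ m : X, ∀ ψ : Y →L[ℝ] ℝ, ψ (T m) = ∫ ω in A, ψ (T (f ω)) ∂ν := by
  exact fun A hA => (TstarYstar_integrable_of_semiEmbedding_general ν T hT.2 (fun ω => T (f ω))
    c hc.le hbound hPettis A hA (measure_ne_top ν A)).imp fun _ => And.right
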